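/- Let X be a finite simple connected graph that is not a tree. If f is an automorphism of X acting trivially on H_1(X,ℤ), then f fixes every bridge of X and induces the identity automorphism on the block tree B(X), provided that every leaf of the block tree of X is a nontrivial block (equivalently, X has minimum degree at least 2). -/

import Mathlib

open SimpleGraph
variable {V : Type*}

variable {V : Type*}

/-- The cycle space (= first homology with coefficients in `R`) of a graph,
realized as antisymmetric flows supported on edges with zero divergence. -/
def cycleSpace (R : Type*) [CommRing R] [Fintype V] (G : SimpleGraph V) :
    Submodule R (V → V → R) where
  carrier := {f | (∀ u v, ¬ G.Adj u v → f u v = 0) ∧ (∀ u v, f u v = - f v u) ∧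
    (∀ u, ∑ v, f u v = 0)}
  add_mem' := by
    rintro f g ⟨hf1, hf2, hf3⟩ ⟨hg1, hg2, hg3⟩
    refine ⟨fun u v h => by simp [hf1 u v h, hg1 u v h], fun u v => ?_, fun u => ?_⟩
    · simp only [Pi.add_apply]; rw [hf2 u v, hg2 u v]; ring
    · simp [Finset.sum_add_distrib, hf3 u, hg3 u]
  zero_mem' := ⟨fun _ _ _ => rfl, fun _ _ => by simp, fun _ => by simp⟩
  smul_mem' := by
    rintro c f ⟨h1, h2, h3⟩
    refine ⟨fun u v h => by simp [h1 u v h], fun u v => by simp [h2 u v], fun u => ?_⟩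
    simp only [Pi.smul_apply, smul_eq_mul]
    rw [← Finset.mul_sum, h3 u, mul_zero]

/-- An automorphism acts trivially (as the identity) on `H_1(X,R)`. -/
def FixesH1 (R : Type*) [CommRing R] [Fintype V] (G : SimpleGraph V) (f : G ≃g G) : Prop :=
  ∀ c ∈ cycleSpace R G, ∀ u v : V, c (f u) (f v) = c u v

/-- A subgraph is 2-connected: at least two vertices, and deleting at most one
vertex leaves it connected. (An edge with its endpoints counts as 2-connected.) -/
def IsTwoConnectedSub (G : SimpleGraph V) (H : G.Subgraph) : Prop :=
  2 ≤ H.verts.ncard ∧ ∀ s : Set V, s.ncard ≤ 1 → ((H.deleteVerts s).coe).Connected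

/-- A block: a maximal 2-connected subgraph. -/
def IsBlock (G : SimpleGraph V) (B : G.Subgraph) : Prop :=
  IsTwoConnectedSub G B ∧ ∀ K : G.Subgraph, IsTwoConnectedSub G K → B ≤ K → K = B

/-- A cutvertex: a vertex whose deletion disconnects the graph. -/
def IsCutvertex (G : SimpleGraph V) (v : V) : Prop :=
  ¬ (((⊤ : G.Subgraph).deleteVerts {v}).coe).Connected

open scoped Classical in
/-- The signed flow of a walk. -/
noncomputable def walkFlow {G : SimpleGraph V} : {u v : V} → G.Walk u v → V → V → ℤ
  | _, _, .nil => fun _ _ => 0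
  | _, _, .cons (u := u) (v := w) _ p => fun a b =>
      (if a = u ∧ b = w then 1 else 0) - (if a = w ∧ b = u then 1 else 0) + walkFlow p a b

lemma walkFlow_antisymm {G : SimpleGraph V} {u v : V} (p : G.Walk u v) (a b : V) :
    walkFlow p a b = - walkFlow p b a := by
  classical
  induction p with
  | nil => simp [walkFlow]
  | cons h p ih =>
    simp only [walkFlow]
    rw [ih]
    simp only [and_comm]
    ring

lemma walkFlow_support {G : SimpleGraph V} {u v : V} (p : G.Walk u v) (a b : V)
    (h : walkFlow p a b ≠ 0) : s(a, b) ∈ p.edges := by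
  classical
  induction p with
  | nil => simp [walkFlow] at h
  | cons h' p ih =>
    simp only [walkFlow] at h
    rw [Walk.edges_cons, List.mem_cons]
    by_contra hc
    push Not at hc
    obtain ⟨h1, h2⟩ := hc
    have h3 : walkFlow p a b = 0 := by
      by_contra h4
      exact h2 (ih h4)
    rw [h3] at h
    simp only [ne_eq, Sym2.eq_iff, not_or] at h1
    simp [h1.1, h1.2] at h

lemma walkFlow_div [Fintype V] {G : SimpleGraph V} [DecidableEq V] {u v : V} (p : G.Walk u v)
    (a : V) : ∑ b, walkFlow p a b = (if a = u then 1 else 0) - (if a = v then 1 else 0) := by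
  induction p with
  | nil => simp [walkFlow]
  | @cons u w v h' p ih =>
    simp only [walkFlow]
    rw [Finset.sum_add_distrib, Finset.sum_sub_distrib, ih]
    have h1 : ∀ (c d : V) (inst : ∀ b, Decidable (a = c ∧ b = d)),
        ∑ b, @ite ℤ (a = c ∧ b = d) (inst b) 1 0 = if a = c then 1 else 0 := by
      intro c d inst
      by_cases hc : a = c <;> simp [hc]
    trans ((if a = u then (1 : ℤ) else 0) - (if a = w then 1 else 0)) +
      ((if a = w then 1 else 0) - (if a = v then 1 else 0))
    · congr 2
      · exact h1 u w _
      · exact h1 w u _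
    · ring

/-- If `x y` is an edge and `p` a walk from `x` to `y` avoiding it, `f x, f y` lie on `p`. -/
lemma fixes_walk [Fintype V] {G : SimpleGraph V} {f : G ≃g G} (hf : FixesH1 ℤ G f) {x y : V}
    (h : G.Adj x y) (p : G.Walk x y) (hp : s(x, y) ∉ p.edges) :
    f x ∈ p.support ∧ f y ∈ p.support := by
  classical
  have hmem : walkFlow (Walk.cons h.symm p) ∈ cycleSpace ℤ G := by
    refine ⟨fun u v huv => ?_, walkFlow_antisymm _, fun u => ?_⟩
    · by_contra hc
      exact huv (Walk.adj_of_mem_edges _ (walkFlow_support _ _ _ hc))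
    · rw [walkFlow_div]; simp
  have h0 : walkFlow p y x = 0 := by
    by_contra hc
    have := walkFlow_support _ _ _ hc
    rw [Sym2.eq_swap] at this
    exact hp this
  have h1 : walkFlow (Walk.cons h.symm p) y x = 1 := by
    simp [walkFlow, h0, h.ne]
  have h2 := hf _ hmem y x
  rw [h1] at h2
  have h3 : s(f y, f x) ∈ (Walk.cons h.symm p).edges := walkFlow_support _ _ _ (by omega)
  have h4 := Walk.fst_mem_support_of_mem_edges _ h3
  have h5 := Walk.snd_mem_support_of_mem_edges _ h3
  rw [Walk.support_cons, List.mem_cons] at h4 h5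
  constructor
  · rcases h5 with h5 | h5
    · rw [h5]; exact p.end_mem_support
    · exact h5
  · rcases h4 with h4 | h4
    · rw [h4]; exact p.end_mem_support
    · exact h4

lemma toSubgraph_le_deleteVerts {G : SimpleGraph V} {H : G.Subgraph} {s : Set V} {u v : V}
    (p : G.Walk u v) (h : p.toSubgraph ≤ H) (hs : ∀ w ∈ p.support, w ∉ s) :
    p.toSubgraph ≤ H.deleteVerts s := by
  constructor
  · intro w hw
    exact ⟨h.1 hw, hs w (by simpa using hw)⟩
  · intro a b hab
    rw [Subgraph.deleteVerts_adj]
    have ha : a ∈ p.toSubgraph.verts := hab.fst_mem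
    have hb : b ∈ p.toSubgraph.verts := hab.snd_mem
    exact ⟨h.1 ha, hs a (by simpa using ha), h.1 hb, hs b (by simpa using hb), h.2 hab⟩

lemma connected_of_root {G : SimpleGraph V} {H : G.Subgraph} (r : V) (hr : r ∈ H.verts)
    (h : ∀ w ∈ H.verts, ∃ q : G.Walk w r, q.toSubgraph ≤ H) : H.Connected := by
  rw [Subgraph.connected_iff_forall_exists_walk_subgraph]
  refine ⟨⟨r, hr⟩, ?_⟩
  intro u v hu hv
  obtain ⟨p, hp⟩ := h u hu
  obtain ⟨q, hq⟩ := h v hv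
  refine ⟨p.append q.reverse, ?_⟩
  rw [Walk.toSubgraph_append, Walk.toSubgraph_reverse]
  exact sup_le hp hq

lemma conn_iff {G : SimpleGraph V} {H : G.Subgraph} : H.coe.Connected ↔ H.Connected :=
  Subgraph.connected_iff'.symm

lemma twoConnected_sup [Finite V] {G : SimpleGraph V} {H K : G.Subgraph}
    (hH : IsTwoConnectedSub G H) (hK : IsTwoConnectedSub G K) {x y : V} (hxy : x ≠ y)
    (hxH : x ∈ H.verts) (hyH : y ∈ H.verts) (hxK : x ∈ K.verts) (hyK : y ∈ K.verts) :
    IsTwoConnectedSub G (H ⊔ K) := by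
  refine ⟨hH.1.trans (Set.ncard_le_ncard (by simp)), fun s hs => ?_⟩
  have h1 := conn_iff.1 (hH.2 s hs)
  have h2 := conn_iff.1 (hK.2 s hs)
  have h3 : ((H.deleteVerts s) ⊓ (K.deleteVerts s)).verts.Nonempty := by
    by_cases hx : x ∈ s
    · have hy : y ∉ s := fun hy => hxy ((Set.ncard_le_one_iff (Set.toFinite s)).1 hs hx hy)
      exact ⟨y, ⟨hyH, hy⟩, ⟨hyK, hy⟩⟩
    · exact ⟨x, ⟨hxH, hx⟩, ⟨hxK, hx⟩⟩
  have h4 := Subgraph.connected_sup h1.preconnected h2.preconnected h3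
  rw [conn_iff]
  have h5 : (H ⊔ K).deleteVerts s = (H.deleteVerts s) ⊔ (K.deleteVerts s) := by
    ext a b
    · simp only [Subgraph.deleteVerts_verts, Subgraph.verts_sup, Set.mem_sdiff, Set.mem_union]
      tauto
    · simp only [Subgraph.deleteVerts_adj, Subgraph.sup_adj, Subgraph.verts_sup, Set.mem_union]
      constructor
      · rintro ⟨-, h1, -, h2, h3 | h3⟩
        · exact Or.inl ⟨h3.fst_mem, h1, h3.snd_mem, h2, h3⟩
        · exact Or.inr ⟨h3.fst_mem, h1, h3.snd_mem, h2, h3⟩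
      · tauto
  rw [h5]
  exact h4

lemma twoConnected_cycle [Finite V] {G : SimpleGraph V} {x y : V} (h : G.Adj x y)
    (p : G.Walk x y) (hp : p.IsPath) :
    IsTwoConnectedSub G (p.toSubgraph ⊔ G.subgraphOfAdj h) := by
  classical
  set C := p.toSubgraph ⊔ G.subgraphOfAdj h with hC
  have hCv : ∀ w, w ∈ C.verts ↔ w ∈ p.support := by
    intro w
    simp only [hC, Subgraph.verts_sup, Set.mem_union, Walk.mem_verts_toSubgraph]
    constructor
    · rintro (h1 | h1)
      · exact h1
      · simp at h1
        rcases h1 with rfl | rfl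
        · exact p.start_mem_support
        · exact p.end_mem_support
    · exact Or.inl
  have hx : x ∈ C.verts := (hCv x).2 p.start_mem_support
  have hy : y ∈ C.verts := (hCv y).2 p.end_mem_support
  constructor
  · have : ({x, y} : Set V).ncard ≤ C.verts.ncard := by
      refine Set.ncard_le_ncard ?_ (Set.toFinite _)
      intro w hw
      rcases hw with rfl | rfl
      · exact hx
      · exact hy
    rwa [Set.ncard_pair h.ne] at this
  intro s hs
  rw [conn_iff]
  have hs1 : ∀ {a b : V}, a ∈ s → b ∈ s → a = b := (Set.ncard_le_one_iff (Set.toFinite s)).1 hs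
  have hpC : p.toSubgraph ≤ C := le_sup_left
  have link : ∀ w ∈ (C.deleteVerts s).verts,
      (∃ q : G.Walk w x, q.toSubgraph ≤ C.deleteVerts s) ∨
      (∃ q : G.Walk w y, q.toSubgraph ≤ C.deleteVerts s) := by
    rintro w ⟨hw, hws⟩
    have hw' := (hCv w).1 hw
    have hspec := p.take_spec hw'
    have hsub : (p.takeUntil w hw').toSubgraph ⊔ (p.dropUntil w hw').toSubgraph ≤ C := by
      rw [← Walk.toSubgraph_append, hspec]; exact hpC
    by_cases h1 : ∃ t ∈ (p.takeUntil w hw').support, t ∈ s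
    · right
      obtain ⟨t, ht, hts⟩ := h1
      refine ⟨p.dropUntil w hw', toSubgraph_le_deleteVerts _ (le_sup_right.trans hsub) ?_⟩
      intro t' ht' ht's
      have : t' = t := hs1 ht's hts
      subst this
      have hp' := hp
      rw [← hspec] at hp'
      have hnd := hp'.support_nodup
      rw [Walk.support_append] at hnd
      have hdis := (List.nodup_append'.1 hnd).2.2
      rw [Walk.support_eq_cons, List.mem_cons] at ht'
      rcases ht' with rfl | ht'
      · exact hws hts
      · exact hdis ht ht'
    · left
      push Not at h1
      refine ⟨(p.takeUntil w hw').reverse, ?_⟩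
      apply toSubgraph_le_deleteVerts
      · rw [Walk.toSubgraph_reverse]; exact le_sup_left.trans hsub
      · intro t ht
        rw [Walk.support_reverse, List.mem_reverse] at ht
        exact h1 t ht
  have hend : ∀ {a b : V} (q : G.Walk a b), q.toSubgraph ≤ C.deleteVerts s → b ∉ s := by
    intro a b q hq
    exact (hq.1 (Walk.end_mem_verts_toSubgraph q)).2
  by_cases hxs : x ∈ s
  · have hys : y ∉ s := fun hys => h.ne (hs1 hxs hys)
    refine connected_of_root y ⟨hy, hys⟩ fun w hw => ?_
    rcases link w hw with ⟨q, hq⟩ | hq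
    · exact absurd hxs (hend q hq)
    · exact hq
  · refine connected_of_root x ⟨hx, hxs⟩ fun w hw => ?_
    rcases link w hw with hq | ⟨q, hq⟩
    · exact hq
    · have hys := hend q hq
      refine ⟨q.append h.symm.toWalk, ?_⟩
      rw [Walk.toSubgraph_append]
      refine sup_le hq ?_
      apply toSubgraph_le_deleteVerts
      · rw [SimpleGraph.Adj.toSubgraph_toWalk, subgraphOfAdj_symm]
        exact le_sup_right
      · intro t ht
        simp [SimpleGraph.Adj.toWalk] at ht
        rcases ht with rfl | rfl <;> assumption

lemma twoConnected_map [Finite V] {G : SimpleGraph V} (f : G ≃g G) {B : G.Subgraph}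
    (hB : IsTwoConnectedSub G B) : IsTwoConnectedSub G (B.map f.toHom) := by
  constructor
  · have : (B.map f.toHom).verts.ncard = B.verts.ncard :=
      Set.ncard_image_of_injective _ f.injective
    rw [this]; exact hB.1
  · intro s hs
    have h1 := hB.2 (f ⁻¹' s) (by
      rw [Set.ncard_preimage_of_injective_subset_range f.injective
        (by rw [f.surjective.range_eq]; exact Set.subset_univ _)]
      exact hs)
    rw [conn_iff] at h1 ⊢
    rw [Subgraph.connected_iff_forall_exists_walk_subgraph] at h1 ⊢
    obtain ⟨⟨a, ha⟩, h2⟩ := h1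
    refine ⟨⟨f a, ⟨a, ha.1, rfl⟩, ha.2⟩, ?_⟩
    rintro u v ⟨⟨u, hu, rfl⟩, hus⟩ ⟨⟨v, hv, rfl⟩, hvs⟩
    obtain ⟨p, hp⟩ := @h2 u v ⟨hu, hus⟩ ⟨hv, hvs⟩
    refine ⟨p.map f.toHom, ?_⟩
    apply toSubgraph_le_deleteVerts
    · rw [Walk.toSubgraph_map]
      exact Subgraph.map_mono (hp.trans Subgraph.deleteVerts_le)
    · intro w hw
      rw [Walk.support_map, List.mem_map] at hw
      obtain ⟨z, hz, rfl⟩ := hw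
      exact (hp.1 ((Walk.mem_verts_toSubgraph p).2 hz)).2

lemma fixes_symm [Fintype V] {G : SimpleGraph V} {f : G ≃g G} (hf : FixesH1 ℤ G f) :
    FixesH1 ℤ G f.symm := by
  intro c hc u v
  have := hf c hc (f.symm u) (f.symm v)
  simpa using this.symm

/-- `a` and `b` are joined by a walk avoiding `t`. -/
def Av (G : SimpleGraph V) (t a b : V) : Prop := ∃ p : G.Walk a b, t ∉ p.support

lemma Av.symm {G : SimpleGraph V} {t a b : V} (h : Av G t a b) : Av G t b a := by
  obtain ⟨p, hp⟩ := h
  exact ⟨p.reverse, by simpa using hp⟩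

lemma Av.trans {G : SimpleGraph V} {t a b c : V} (h : Av G t a b) (h' : Av G t b c) :
    Av G t a c := by
  obtain ⟨p, hp⟩ := h
  obtain ⟨q, hq⟩ := h'
  refine ⟨p.append q, ?_⟩
  rw [Walk.mem_support_append_iff]
  tauto

lemma Av.step {G : SimpleGraph V} {t a b c : V} (h : Av G t a b) (h' : G.Adj b c) (hc : c ≠ t) :
    Av G t a c := by
  have hb : b ≠ t := by
    rintro rfl
    obtain ⟨p, hp⟩ := h
    exact hp p.end_mem_support
  exact h.trans ⟨h'.toWalk, by simp [SimpleGraph.Adj.toWalk, hb.symm, hc.symm]⟩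

lemma Av.map {G : SimpleGraph V} {t a b : V} (f : G ≃g G) (h : Av G t a b) :
    Av G (f t) (f a) (f b) := by
  obtain ⟨p, hp⟩ := h
  refine ⟨p.map f.toHom, ?_⟩
  rw [Walk.support_map, List.mem_map]
  rintro ⟨z, hz, hzt⟩
  exact hp (f.injective hzt ▸ hz)

lemma exists_cycle_aux [Fintype V] {G : SimpleGraph V}
    (hmin : ∀ v : V, 2 ≤ (G.neighborSet v).ncard) (v : V) (K : Set V) (hvK : v ∉ K)
    (hK : ∀ w ∈ K, ∀ z, G.Adj w z → z ∈ K ∨ z = v) (n : ℕ) :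
    ∀ (w : V) (q : G.Walk w v), w ∈ K → q.IsPath → (∀ z ∈ q.support, z ∈ K ∨ z = v) →
      Fintype.card V ≤ q.length + n →
      ∃ x y : V, ∃ p : G.Walk x y, G.Adj x y ∧ s(x, y) ∉ p.edges ∧ x ∈ K ∧
        ∀ z ∈ p.support, z ∈ K ∨ z = v := by
  classical
  induction n with
  | zero =>
    intro w q _ hq _ hn
    have := hq.length_lt
    omega
  | succ n ih =>
    intro w q hw hq hs hn
    cases q with
    | nil => exact absurd hw hvK
    | @cons _ m _ h q' =>
      have hex : ∃ z ∈ G.neighborSet w, z ≠ m :=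
        Set.exists_ne_of_one_lt_ncard (by have := hmin w; omega) m
      obtain ⟨z, hz, hzm⟩ := hex
      have hz : G.Adj w z := hz
      by_cases hzs : z ∈ (Walk.cons h q').support
      · rw [Walk.support_cons, List.mem_cons] at hzs
        have hzq : z ∈ q'.support := hzs.resolve_left hz.ne'
        have hwq : w ∉ q'.support := (Walk.cons_isPath_iff h q').1 hq |>.2
        refine ⟨w, z, Walk.cons h (q'.takeUntil z hzq), hz, ?_, hw, ?_⟩
        · rw [Walk.edges_cons, List.mem_cons]
          rintro (h1 | h1)
          · rw [Sym2.eq_iff] at h1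
            rcases h1 with h1 | h1
            · exact hzm h1.2
            · exact h.ne h1.1
          · exact hwq (q'.support_takeUntil_subset_support hzq
              (Walk.fst_mem_support_of_mem_edges _ h1))
        · intro t ht
          apply hs
          rw [Walk.support_cons, List.mem_cons] at ht ⊢
          rcases ht with ht | ht
          · exact Or.inl ht
          · exact Or.inr (q'.support_takeUntil_subset_support hzq ht)
      · have hzK : z ∈ K := by
          rcases hK w hw z hz with h1 | h1
          · exact h1
          · subst h1
            exact absurd (Walk.end_mem_support _) hzs
        refine ih z (Walk.cons hz.symm (Walk.cons h q')) hzK (hq.cons hzs) ?_ ?_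
        · intro t ht
          rw [Walk.support_cons, List.mem_cons] at ht
          rcases ht with rfl | ht
          · exact Or.inl hzK
          · exact hs t ht
        · rw [Walk.length_cons]; omega

lemma no_comp [Fintype V] {G : SimpleGraph V} (hG : G.Connected)
    (hmin : ∀ v : V, 2 ≤ (G.neighborSet v).ncard)
    {f : G ≃g G} (hf : FixesH1 ℤ G f) {v a : V} (ha : a ≠ v) (hfv : f v ≠ v)
    (hna : ¬ Av G v a (f v)) : False := by
  classical
  set K : Set V := {b | Av G v a b} with hKdef
  have hvK : v ∉ K := by
    rintro ⟨p, hp⟩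
    exact hp p.end_mem_support
  have haK : a ∈ K := ⟨Walk.nil, by simpa using ha.symm⟩
  have hK : ∀ w ∈ K, ∀ z, G.Adj w z → z ∈ K ∨ z = v := by
    intro w hw z hz
    by_cases h : z = v
    · exact Or.inr h
    · exact Or.inl (Av.step hw hz h)
  -- a vertex of `K` adjacent to `v`
  obtain ⟨m, hmK, hvm⟩ : ∃ m ∈ K, G.Adj v m := by
    obtain ⟨p, hp⟩ := (hG v a).exists_isPath
    cases p with
    | nil => exact absurd rfl ha
    | @cons _ m _ h q =>
      exact ⟨m, Av.symm ⟨q, ((Walk.cons_isPath_iff h q).1 hp).2⟩, h⟩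
  obtain ⟨x, y, p, hxy, hp, hxK, hsup⟩ := exists_cycle_aux hmin v K hvK hK (Fintype.card V) m
    hvm.symm.toWalk hmK (by simp [SimpleGraph.Adj.toWalk, hvm.ne'])
    (by
      intro z hz
      simp [SimpleGraph.Adj.toWalk] at hz
      rcases hz with rfl | rfl
      · exact Or.inl hmK
      · exact Or.inr rfl) (by omega)
  have hfx := hsup _ (fixes_walk hf hxy p hp).1
  have key : ∀ b ∈ K, Av G (f v) a b := by
    rintro b ⟨p, hp⟩
    refine ⟨p, fun hc => hna ⟨p.takeUntil _ hc, fun hc' => hp ?_⟩⟩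
    exact p.support_takeUntil_subset_support hc hc'
  have key' : ∀ b, b ∈ K ∨ b = v → Av G (f v) a b := by
    rintro b (hb | rfl)
    · exact key b hb
    · exact (key m hmK).step hvm.symm hfv.symm
  have hsubset : insert v K ⊆ f '' K := by
    intro b hb
    have hb' : b ∈ K ∨ b = v := (Set.mem_insert_iff.1 hb).symm
    have h1 := ((key' _ hfx).symm.trans (key' b hb')).map f.symm
    simp only [RelIso.symm_apply_apply] at h1
    exact ⟨f.symm b, Av.trans hxK h1, by simp⟩
  have h2 := Set.ncard_le_ncard hsubset
  rw [Set.ncard_insert_of_notMem hvK, Set.ncard_image_of_injective _ f.injective] at h2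
  omega

lemma fix_of_sep [Fintype V] {G : SimpleGraph V} (hG : G.Connected)
    (hmin : ∀ v : V, 2 ≤ (G.neighborSet v).ncard)
    {f : G ≃g G} (hf : FixesH1 ℤ G f) {v a b : V} (ha : a ≠ v) (hb : b ≠ v)
    (hab : ¬ Av G v a b) : f v = v := by
  by_contra hfv
  by_cases h : Av G v a (f v)
  · exact no_comp hG hmin hf hb hfv fun h' => hab (h.trans h'.symm)
  · exact no_comp hG hmin hf ha hfv h

lemma cutvertex_sep [Fintype V] {G : SimpleGraph V}
    (hmin : ∀ v : V, 2 ≤ (G.neighborSet v).ncard) {v : V} (hv : IsCutvertex G v) :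
    ∃ a b, a ≠ v ∧ b ≠ v ∧ ¬ Av G v a b := by
  by_contra hc
  push Not at hc
  apply hv
  rw [conn_iff]
  obtain ⟨z, hz, -⟩ : ∃ z ∈ G.neighborSet v, z ≠ v :=
    Set.exists_ne_of_one_lt_ncard (by have := hmin v; omega) v
  have hz : G.Adj v z := hz
  refine connected_of_root z ⟨trivial, hz.ne'⟩ ?_
  rintro w ⟨-, hw⟩
  obtain ⟨p, hp⟩ := hc w z hw hz.ne'
  refine ⟨p, toSubgraph_le_deleteVerts _ le_top ?_⟩
  rintro t ht rfl
  exact hp ht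

lemma bridge_sep [Fintype V] {G : SimpleGraph V}
    (hmin : ∀ v : V, 2 ≤ (G.neighborSet v).ncard) {u v : V} (huv : G.Adj u v)
    (hb : G.IsBridge s(u, v)) : ∃ a b, a ≠ u ∧ b ≠ u ∧ ¬ Av G u a b := by
  obtain ⟨z, hz, hzv⟩ : ∃ z ∈ G.neighborSet u, z ≠ v :=
    Set.exists_ne_of_one_lt_ncard (by have := hmin u; omega) v
  have hz : G.Adj u z := hz
  refine ⟨z, v, hz.ne', huv.ne', ?_⟩
  rintro ⟨p, hp⟩
  have h1 := (isBridge_iff_forall_walk_mem_edges.1 hb) (Walk.cons hz p)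
  rw [Walk.edges_cons, List.mem_cons] at h1
  rcases h1 with h1 | h1
  · rw [Sym2.eq_iff] at h1
    rcases h1 with h1 | h1
    · exact hzv h1.2.symm
    · exact huv.ne' h1.2
  · exact hp (Walk.fst_mem_support_of_mem_edges _ h1)

lemma bridge_fix [Fintype V] {G : SimpleGraph V} (hG : G.Connected)
    (hmin : ∀ v : V, 2 ≤ (G.neighborSet v).ncard)
    {f : G ≃g G} (hf : FixesH1 ℤ G f) {u v : V} (huv : G.Adj u v)
    (hb : G.IsBridge s(u, v)) : f u = u ∧ f v = v := by
  constructor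
  · obtain ⟨a, b, h1, h2, h3⟩ := bridge_sep hmin huv hb
    exact fix_of_sep hG hmin hf h1 h2 h3
  · rw [Sym2.eq_swap] at hb
    obtain ⟨a, b, h1, h2, h3⟩ := bridge_sep hmin huv.symm hb
    exact fix_of_sep hG hmin hf h1 h2 h3

lemma block_le [Fintype V] {G : SimpleGraph V} (hG : G.Connected)
    (hmin : ∀ v : V, 2 ≤ (G.neighborSet v).ncard)
    {f : G ≃g G} (hf : FixesH1 ℤ G f) {B : G.Subgraph} (hB : IsBlock G B) :
    B.map f.toHom ≤ B := by
  classical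
  have absorb : ∀ K : G.Subgraph, IsTwoConnectedSub G K → ∀ x y : V, x ≠ y → x ∈ B.verts →
      y ∈ B.verts → x ∈ K.verts → y ∈ K.verts → K ≤ B := by
    intro K hK x y hxy h1 h2 h3 h4
    have := hB.2 _ (twoConnected_sup hB.1 hK hxy h1 h2 h3 h4) le_sup_left
    rw [← this]
    exact le_sup_right
  obtain ⟨x, y, hxy⟩ : ∃ x y, B.Adj x y := by
    have hc := hB.1.2 ∅ (by simp)
    rw [Subgraph.deleteVerts_empty] at hc
    obtain ⟨a, ha, b, hb, hab⟩ := (Set.one_lt_ncard (Set.toFinite _)).1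
      (show 1 < B.verts.ncard from hB.1.1)
    obtain ⟨p⟩ := hc.preconnected ⟨a, ha⟩ ⟨b, hb⟩
    cases p with
    | nil => exact absurd rfl hab
    | cons h q => exact ⟨_, _, h⟩
  have hadj := hxy.adj_sub
  have hmem : f x ∈ B.verts ∧ f y ∈ B.verts := by
    by_cases hb : G.IsBridge s(x, y)
    · obtain ⟨h1, h2⟩ := bridge_fix hG hmin hf hadj hb
      rw [h1, h2]
      exact ⟨hxy.fst_mem, hxy.snd_mem⟩
    · rw [isBridge_iff_forall_walk_mem_edges] at hb
      push Not at hb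
      obtain ⟨p, hp⟩ := hb
      have hp' : s(x, y) ∉ p.bypass.edges := fun h => hp (p.edges_bypass_subset_edges h)
      have hle := absorb _ (twoConnected_cycle hadj p.bypass p.bypass_isPath) x y hadj.ne
        hxy.fst_mem hxy.snd_mem (Or.inl (by simp)) (Or.inl (by simp))
      have h2 := fixes_walk hf hadj p.bypass hp'
      exact ⟨hle.1 (Or.inl (by simpa using h2.1)), hle.1 (Or.inl (by simpa using h2.2))⟩
  exact absorb _ (twoConnected_map f hB.1) (f x) (f y) (f.injective.ne hadj.ne) hmem.1 hmem.2
    ⟨x, hxy.fst_mem, rfl⟩ ⟨y, hxy.snd_mem, rfl⟩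

theorem kernel_fixes_bridges_and_blockTree [Fintype V] (G : SimpleGraph V)
    (hG : G.Connected) (hnt : ¬ G.IsAcyclic)
    (hmin : ∀ v : V, 2 ≤ (G.neighborSet v).ncard)
    (f : G ≃g G) (hf : FixesH1 ℤ G f) :
    (∀ u v : V, G.Adj u v → G.IsBridge s(u, v) → s(f u, f v) = s(u, v)) ∧
    (∀ B : G.Subgraph, IsBlock G B → B.map f.toHom = B) ∧
    (∀ v : V, IsCutvertex G v → f v = v) := by
  refine ⟨fun u v huv hb => ?_, fun B hB => ?_, fun v hv => ?_⟩
  · obtain ⟨h1, h2⟩ := bridge_fix hG hmin hf huv hb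
    rw [h1, h2]
  · refine le_antisymm (block_le hG hmin hf hB) ?_
    have h1 := Subgraph.map_mono (f := f.toHom) (block_le hG hmin (fixes_symm hf) hB)
    rw [← Subgraph.map_comp] at h1
    have h2 : f.toHom.comp f.symm.toHom = Hom.id := by
      ext a
      exact f.apply_symm_apply a
    rw [h2, Subgraph.map_id] at h1
    exact h1
  · obtain ⟨a, b, h1, h2, h3⟩ := cutvertex_sep hmin hv
    exact fix_of_sep hG hmin hf h1 h2 h3
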